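/- For every integer ℓ ≥ 1 and every real ρ with 0 < ρ < 1 there exists a real α with 0 ≤ α < 1, depending only on ℓ and ρ, with the following property: for every Lebesgue-measurable set T ⊆ ℝ² with B(0,ρ) ⊆ T ⊆ B(0,1), every real polynomial q in two variables of total degree at most ℓ+1, and every real polynomial p in two variables of total degree at most ℓ−1, one has |∫_T ⟨∇q(x), p(x) x^⊥⟩ dx| ≤ α (∫_T ‖∇q(x)‖² dx)^{1/2} (∫_T ‖p(x) x^⊥‖² dx)^{1/2}, where x^⊥ := (x₂, −x₁). (This is the normalized, bilinear form of the uniform bound ‖π_S π_{Sᶜ}‖ ≤ α < 1 for the two-dimensional gradient space and its rotated Koszul complement on faces.) -/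

import Mathlib

/-!
Let `∇q = w` on a nonempty open set, with `w` tangential: `⟨x, w(x)⟩ = 0`. Then the polynomial
`∑ᵢ xᵢ ∂ᵢq` vanishes, and since the Euler operator multiplies the coefficients of degree `d` by `d`,
`q` is constant and `∇q = 0`. Gradients and tangential fields, such as `p x^⊥`, thus have only `0`
in common even after restriction to the inner ball `U`. In finite dimension this is quantitative:
there is a `C` with `‖v‖_{L²(K)} ≤ C ‖v - w‖_{L²(U)}` for gradients `v` and tangential fields `w`,
where `K` is the outer ball. For `U ⊆ T ⊆ K` the left side dominates `‖v‖_{L²(T)}` and the right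
side is at most `C ‖v - w‖_{L²(T)}`, so `C` serves every `T` at once. Choosing the multiple of `w`
nearest to `v` turns this inequality into the angle bound with `α = √(1 - C⁻²)`.
-/

open MvPolynomial MeasureTheory
open scoped InnerProductSpace

/-- Rotation of a vector of `ℝ²` by `−π/2`: `y ↦ (y₂, −y₁)`. -/
noncomputable def perpVec (y : EuclideanSpace ℝ (Fin 2)) : EuclideanSpace ℝ (Fin 2) :=
  (WithLp.equiv 2 (Fin 2 → ℝ)).symm ![y 1, -(y 0)]

/-- The gradient of a polynomial in two variables, evaluated at a point of `ℝ²`. -/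
noncomputable def polyGrad2 (q : MvPolynomial (Fin 2) ℝ) (x : EuclideanSpace ℝ (Fin 2)) :
    EuclideanSpace ℝ (Fin 2) :=
  (WithLp.equiv 2 (Fin 2 → ℝ)).symm fun i => eval (fun j => x j) (pderiv i q)

open scoped Topology

theorem exists_pos_forall_norm_le_mul_norm_map_sub {𝕜 E F : Type*} [NontriviallyNormedField 𝕜]
    [CompleteSpace 𝕜] [NormedAddCommGroup E] [NormedSpace 𝕜 E] [FiniteDimensional 𝕜 E]
    [NormedAddCommGroup F] [NormedSpace 𝕜 F] (f : E →ₗ[𝕜] F) (W : Submodule 𝕜 F)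
    [IsClosed (W : Set F)] (hf : ∀ v, f v ∈ W → v = 0) :
    ∃ C : ℝ, 0 < C ∧ ∀ v, ∀ w ∈ W, ‖v‖ ≤ C * ‖f v - w‖ := by
  have hker : LinearMap.ker (W.mkQ ∘ₗ f) = ⊥ :=
    LinearMap.ker_eq_bot'.2 fun v hv => hf v ((Submodule.Quotient.mk_eq_zero W).1 hv)
  obtain ⟨C, hC, hCf⟩ := (W.mkQ ∘ₗ f).exists_antilipschitzWith hker
  refine ⟨C, hC, fun v w hw => ?_⟩
  calc ‖v‖ ≤ C * ‖W.mkQ (f v)‖ := ZeroHomClass.bound_of_antilipschitz (W.mkQ ∘ₗ f) hCf v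
    _ = C * ‖W.mkQ (f v - w)‖ := by
      rw [map_sub, (Submodule.mkQ_apply W w).trans ((Submodule.Quotient.mk_eq_zero W).2 hw),
        sub_zero]
    _ ≤ C * ‖f v - w‖ := by
      gcongr
      exact Submodule.Quotient.norm_mk_le W _

theorem abs_real_inner_le_of_forall_norm_le_mul_norm_sub_smul {E : Type*}
    [SeminormedAddCommGroup E] [InnerProductSpace ℝ E] {C : ℝ} (hC : 0 < C) {v w : E}
    (h : ∀ t : ℝ, ‖v‖ ≤ C * ‖v - t • w‖) :
    |⟪v, w⟫_ℝ| ≤ √(1 - (C ^ 2)⁻¹) * ‖v‖ * ‖w‖ := by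
  rcases (norm_nonneg w).eq_or_lt with hw | hw
  · simpa [← hw] using abs_real_inner_le_norm v w
  -- `⟪v, w⟫ / ‖w‖ ^ 2` is the value of `t` that minimizes `‖v - t • w‖`.
  have hdist : ‖v - (⟪v, w⟫_ℝ / ‖w‖ ^ 2) • w‖ ^ 2 = ‖v‖ ^ 2 - ⟪v, w⟫_ℝ ^ 2 / ‖w‖ ^ 2 := by
    rw [norm_sub_sq_real, real_inner_smul_right, norm_smul, mul_pow, Real.norm_eq_abs, sq_abs]
    field_simp
    ring
  have hsq : ‖v‖ ^ 2 ≤ C ^ 2 * (‖v‖ ^ 2 - ⟪v, w⟫_ℝ ^ 2 / ‖w‖ ^ 2) := by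
    rw [← hdist, ← mul_pow]
    exact pow_le_pow_left₀ (norm_nonneg v) (h _) 2
  have hinner : ⟪v, w⟫_ℝ ^ 2 ≤ (1 - (C ^ 2)⁻¹) * (‖v‖ * ‖w‖) ^ 2 := by
    rw [← inv_mul_le_iff₀ (by positivity), le_sub_comm, div_le_iff₀ (by positivity)] at hsq
    linarith
  calc |⟪v, w⟫_ℝ| ≤ √((1 - (C ^ 2)⁻¹) * (‖v‖ * ‖w‖) ^ 2) := Real.abs_le_sqrt hinner
    _ = √(1 - (C ^ 2)⁻¹) * ‖v‖ * ‖w‖ := by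
      rw [Real.sqrt_mul' _ (by positivity), Real.sqrt_sq (by positivity), mul_assoc]

theorem norm_LpToLpRestrictCLM_mono {X F 𝕜 : Type*} [MeasurableSpace X] [NormedAddCommGroup F]
    [NormedRing 𝕜] [Module 𝕜 F] [IsBoundedSMul 𝕜 F] {p : ENNReal} [Fact (1 ≤ p)] {μ : Measure X}
    {S T : Set X} (hST : S ⊆ T) (f : Lp F p μ) :
    ‖LpToLpRestrictCLM X F 𝕜 μ p S f‖ ≤ ‖LpToLpRestrictCLM X F 𝕜 μ p T f‖ := by
  have hnorm (A : Set X) :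
      ‖LpToLpRestrictCLM X F 𝕜 μ p A f‖ = (eLpNorm f p (μ.restrict A)).toReal := by
    rw [Lp.norm_def, eLpNorm_congr_ae (LpToLpRestrictCLM_coeFn 𝕜 A f)]
  rw [hnorm, hnorm]
  exact ENNReal.toReal_mono ((Lp.memLp f).restrict T).eLpNorm_ne_top
    (eLpNorm_mono_measure _ (Measure.restrict_mono hST le_rfl))

section L2

variable {X H : Type*} [MeasurableSpace X] {μ : Measure X} [NormedAddCommGroup H]
  [InnerProductSpace ℝ H]

theorem exists_forall_superset_abs_inner_LpToLpRestrictCLM_le (V W : Submodule ℝ (Lp H 2 μ))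
    [FiniteDimensional ℝ V] [FiniteDimensional ℝ W] (U : Set X)
    (hVW : ∀ v ∈ V, ∀ w ∈ W, v =ᵐ[μ.restrict U] w → v = 0) :
    ∃ α : ℝ, 0 ≤ α ∧ α < 1 ∧ ∀ T, U ⊆ T → ∀ v ∈ V, ∀ w ∈ W,
      |⟪LpToLpRestrictCLM X H ℝ μ 2 T v, LpToLpRestrictCLM X H ℝ μ 2 T w⟫_ℝ| ≤
        α * ‖LpToLpRestrictCLM X H ℝ μ 2 T v‖ * ‖LpToLpRestrictCLM X H ℝ μ 2 T w‖ := by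
  let R (T : Set X) := LpToLpRestrictCLM X H ℝ μ 2 T
  let RU : Lp H 2 μ →ₗ[ℝ] Lp H 2 (μ.restrict U) := (R U).toLinearMap
  have : IsClosed (W.map RU : Set (Lp H 2 (μ.restrict U))) :=
    Submodule.closed_of_finiteDimensional _
  have hinj : ∀ v : V, RU.domRestrict V v ∈ W.map RU → v = 0 := by
    rintro ⟨v, hv⟩ ⟨w, hw, hwv : R U w = R U v⟩
    have hae : v =ᵐ[μ.restrict U] w :=
      (LpToLpRestrictCLM_coeFn ℝ U v).symm.trans (hwv ▸ LpToLpRestrictCLM_coeFn ℝ U w)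
    exact Subtype.ext (hVW v hv w hw hae)
  obtain ⟨C, hC, hbound⟩ := exists_pos_forall_norm_le_mul_norm_map_sub _ _ hinj
  refine ⟨√(1 - (C ^ 2)⁻¹), Real.sqrt_nonneg _, ?_, fun T hUT v hv w hw => ?_⟩
  · rw [Real.sqrt_lt' one_pos, one_pow, sub_lt_self_iff]
    positivity
  refine abs_real_inner_le_of_forall_norm_le_mul_norm_sub_smul hC fun t => ?_
  calc ‖R T v‖ ≤ ‖v‖ := norm_Lp_toLp_restrict_le T v
    _ ≤ C * ‖R U v - R U (t • w)‖ :=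
      hbound ⟨v, hv⟩ _ (Submodule.mem_map_of_mem (W.smul_mem t hw))
    _ ≤ C * ‖R T (v - t • w)‖ := by
      rw [← map_sub]
      gcongr
      exact norm_LpToLpRestrictCLM_mono hUT _
    _ = C * ‖R T v - t • R T w‖ := by rw [map_sub, map_smul]

theorem inner_LpToLpRestrictCLM_of_ae_eq {u v : Lp H 2 μ} {f g : X → H} (hu : u =ᵐ[μ] f)
    (hv : v =ᵐ[μ] g) (T : Set X) :
    ⟪LpToLpRestrictCLM X H ℝ μ 2 T u, LpToLpRestrictCLM X H ℝ μ 2 T v⟫_ℝ =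
      ∫ x in T, ⟪f x, g x⟫_ℝ ∂μ := by
  rw [L2.inner_def]
  refine integral_congr_ae ?_
  filter_upwards [(LpToLpRestrictCLM_coeFn ℝ T u).trans (ae_restrict_of_ae hu),
    (LpToLpRestrictCLM_coeFn ℝ T v).trans (ae_restrict_of_ae hv)] with x hux hvx
  rw [hux, hvx]

theorem norm_LpToLpRestrictCLM_of_ae_eq {u : Lp H 2 μ} {f : X → H} (hu : u =ᵐ[μ] f) (T : Set X) :
    ‖LpToLpRestrictCLM X H ℝ μ 2 T u‖ = √(∫ x in T, ‖f x‖ ^ 2 ∂μ) := by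
  rw [norm_eq_sqrt_real_inner, inner_LpToLpRestrictCLM_of_ae_eq hu hu]
  simp only [real_inner_self_eq_norm_sq]

end L2

theorem memLp_restrict_of_continuous_of_isBounded {X E : Type*} [PseudoMetricSpace X]
    [ProperSpace X] [MeasurableSpace X] [OpensMeasurableSpace X] [NormedAddCommGroup E]
    [SecondCountableTopologyEither X E] {μ : Measure X} [IsFiniteMeasureOnCompacts μ] {f : X → E}
    (hf : Continuous f) {K : Set X} (hK : Bornology.IsBounded K) (p : ENNReal) :
    MemLp f p (μ.restrict K) := by
  have : IsFiniteMeasure (μ.restrict K) := isFiniteMeasure_restrict.2 hK.measure_lt_top.ne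
  obtain ⟨C, hC⟩ := hK.isCompact_closure.exists_bound_of_continuousOn hf.continuousOn
  exact MemLp.of_bound hf.aestronglyMeasurable C <|
    ae_restrict_of_ae_restrict_of_subset subset_closure
      (ae_restrict_of_forall_mem isClosed_closure.measurableSet hC)

theorem mvPolynomial_eq_of_eventually_eval_eq {R σ : Type*} [CommRing R] [IsDomain R]
    [TopologicalSpace R] [T1Space R] [∀ a : R, (𝓝[≠] a).NeBot] {p q : MvPolynomial σ R} {x : σ → R}
    (h : ∀ᶠ y in 𝓝 x, eval y p = eval y q) : p = q := by
  rw [nhds_pi] at h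
  obtain ⟨I, -, t, ht, hsub⟩ := Filter.mem_pi.1 h
  exact funext_set t (fun i => infinite_of_mem_nhds (x i) (ht i)) fun y hy =>
    hsub (Set.pi_mono' (fun _ _ => subset_rfl) (Set.subset_univ I) hy)

section Euler

variable {R σ : Type*} [CommSemiring R] [Fintype σ]

theorem coeff_sum_X_mul_pderiv (q : MvPolynomial σ R) (m : σ →₀ ℕ) :
    coeff m (∑ i, X i * pderiv i q) = m.degree • coeff m q := by
  classical
  induction q using MvPolynomial.induction_on' with
  | monomial u a =>
    rw [(isHomogeneous_monomial a (rfl : u.degree = u.degree)).sum_X_mul_pderiv, coeff_smul,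
      coeff_monomial]
    split_ifs with hu
    · rw [hu]
    · rw [smul_zero, smul_zero]
  | add r s hr hs =>
    simp only [map_add, mul_add, Finset.sum_add_distrib, coeff_add, hr, hs, smul_add]

theorem pderiv_eq_zero_of_sum_X_mul_pderiv_eq_zero [IsAddTorsionFree R] {q : MvPolynomial σ R}
    (h : ∑ i, X i * pderiv i q = 0) (i : σ) : pderiv i q = 0 := by
  have hconst : q = C (coeff 0 q) := by
    classical
    ext m
    rw [coeff_C]
    split_ifs with hm
    · rw [hm]
    · have hdeg : m.degree • coeff m q = 0 := by rw [← coeff_sum_X_mul_pderiv, h, coeff_zero]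
      exact (nsmul_eq_zero_iff_right (mt (Finsupp.degree_eq_zero_iff m).1 (Ne.symm hm))).1 hdeg
  rw [hconst, pderiv_C]

/-- The gradient of a polynomial as a vector of polynomials. -/
noncomputable def polyGradient : MvPolynomial σ R →ₗ[R] σ → MvPolynomial σ R :=
  LinearMap.pi fun i => (pderiv i).toLinearMap

theorem disjoint_range_polyGradient [IsAddTorsionFree R] {W : Submodule R (σ → MvPolynomial σ R)}
    (hW : ∀ w ∈ W, ∑ i, X i * w i = 0) : Disjoint (LinearMap.range polyGradient) W := by
  rw [Submodule.disjoint_def]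
  rintro _ ⟨q, rfl⟩ hq
  exact funext (pderiv_eq_zero_of_sum_X_mul_pderiv_eq_zero (hW _ hq))

end Euler

section PolyMap

variable {ι κ : Type*}

/-- The polynomial map between Euclidean spaces with the given components; for `κ = ι` these are the
polynomial vector fields. -/
noncomputable def polyMap :
    (κ → MvPolynomial ι ℝ) →ₗ[ℝ] EuclideanSpace ℝ ι → EuclideanSpace ℝ κ where
  toFun v x := WithLp.toLp 2 fun i => eval x (v i)
  map_add' v w := by ext; simp
  map_smul' c v := by ext; simp [smul_eval]

theorem continuous_polyMap (v : κ → MvPolynomial ι ℝ) : Continuous (polyMap v) :=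
  (PiLp.continuous_toLp 2 _).comp <| continuous_pi fun i =>
    (MvPolynomial.continuous_eval (v i)).comp (PiLp.continuous_ofLp 2 _)

theorem eq_of_eqOn_polyMap {v w : κ → MvPolynomial ι ℝ} {U : Set (EuclideanSpace ℝ ι)}
    (hU : IsOpen U) (hU₀ : U.Nonempty) (h : Set.EqOn (polyMap v) (polyMap w) U) : v = w := by
  obtain ⟨x, hx⟩ := hU₀
  have hnhds : ∀ᶠ y in 𝓝 x.ofLp, WithLp.toLp 2 y ∈ U :=
    (PiLp.continuous_toLp 2 _).continuousAt (hU.mem_nhds hx)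
  funext i
  exact mvPolynomial_eq_of_eventually_eval_eq <| hnhds.mono fun y hy => congrArg (· i) (h hy)

variable [Finite ι] [Fintype κ] {μ : Measure (EuclideanSpace ℝ ι)} [IsFiniteMeasureOnCompacts μ]
  {K : Set (EuclideanSpace ℝ ι)}

theorem memLp_polyMap (hK : Bornology.IsBounded K) (v : κ → MvPolynomial ι ℝ) :
    MemLp (polyMap v) 2 (μ.restrict K) :=
  have := Fintype.ofFinite ι
  memLp_restrict_of_continuous_of_isBounded (continuous_polyMap v) hK 2

/-- The class in `L²(K)` of a polynomial map, for bounded `K`. -/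
noncomputable def polyMapLp (μ : Measure (EuclideanSpace ℝ ι)) [IsFiniteMeasureOnCompacts μ]
    (hK : Bornology.IsBounded K) :
    (κ → MvPolynomial ι ℝ) →ₗ[ℝ] Lp (EuclideanSpace ℝ κ) 2 (μ.restrict K) where
  toFun v := (memLp_polyMap hK v).toLp (polyMap v)
  map_add' v w := by
    rw [← MemLp.toLp_add]
    exact MemLp.toLp_congr _ _ (by rw [map_add])
  map_smul' c v := by
    rw [RingHom.id_apply, ← MemLp.toLp_const_smul]
    exact MemLp.toLp_congr _ _ (by rw [map_smul])

theorem polyMapLp_ae_eq (hK : Bornology.IsBounded K) (v : κ → MvPolynomial ι ℝ) :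
    polyMapLp μ hK v =ᵐ[μ.restrict K] polyMap v :=
  (memLp_polyMap hK v).coeFn_toLp

theorem eq_of_polyMapLp_ae_eq_restrict [μ.IsOpenPosMeasure] (hK : Bornology.IsBounded K)
    {U : Set (EuclideanSpace ℝ ι)} (hU : IsOpen U) (hU₀ : U.Nonempty) (hUK : U ⊆ K)
    {v w : κ → MvPolynomial ι ℝ}
    (h : polyMapLp μ hK v =ᵐ[(μ.restrict K).restrict U] polyMapLp μ hK w) : v = w := by
  have hae : polyMap v =ᵐ[μ.restrict U] polyMap w := by
    rw [← Measure.restrict_restrict_of_subset hUK]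
    exact Filter.EventuallyEq.trans (ae_restrict_of_ae (polyMapLp_ae_eq hK v).symm)
      (h.trans (ae_restrict_of_ae (polyMapLp_ae_eq hK w)))
  exact eq_of_eqOn_polyMap hU hU₀ (Measure.eqOn_open_of_ae_eq hae hU
    (continuous_polyMap v).continuousOn (continuous_polyMap w).continuousOn)

theorem exists_forall_abs_setIntegral_inner_polyMap_le_of_disjoint
    (μ : Measure (EuclideanSpace ℝ ι)) [IsFiniteMeasureOnCompacts μ] [μ.IsOpenPosMeasure]
    {U : Set (EuclideanSpace ℝ ι)} (hU : IsOpen U) (hU₀ : U.Nonempty) (hUK : U ⊆ K)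
    (hK : Bornology.IsBounded K) {V W : Submodule ℝ (κ → MvPolynomial ι ℝ)}
    [FiniteDimensional ℝ V] [FiniteDimensional ℝ W] (hVW : Disjoint V W) :
    ∃ α : ℝ, 0 ≤ α ∧ α < 1 ∧ ∀ T, U ⊆ T → T ⊆ K → ∀ v ∈ V, ∀ w ∈ W,
      |∫ x in T, ⟪polyMap v x, polyMap w x⟫_ℝ ∂μ| ≤
        α * √(∫ x in T, ‖polyMap v x‖ ^ 2 ∂μ) * √(∫ x in T, ‖polyMap w x‖ ^ 2 ∂μ) := by
  have hinj : ∀ f ∈ V.map (polyMapLp μ hK), ∀ g ∈ W.map (polyMapLp μ hK),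
      f =ᵐ[(μ.restrict K).restrict U] g → f = 0 := by
    rintro _ ⟨v, hv, rfl⟩ _ ⟨w, hw, rfl⟩ h
    obtain rfl := eq_of_polyMapLp_ae_eq_restrict hK hU hU₀ hUK h
    rw [Submodule.disjoint_def.1 hVW v hv hw, map_zero]
  obtain ⟨α, hα₀, hα₁, hα⟩ := exists_forall_superset_abs_inner_LpToLpRestrictCLM_le _ _ U hinj
  refine ⟨α, hα₀, hα₁, fun T hUT hTK v hv w hw => ?_⟩
  have hle := hα T hUT _ (Submodule.mem_map_of_mem hv) _ (Submodule.mem_map_of_mem hw)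
  rwa [inner_LpToLpRestrictCLM_of_ae_eq (polyMapLp_ae_eq hK v) (polyMapLp_ae_eq hK w),
    norm_LpToLpRestrictCLM_of_ae_eq (polyMapLp_ae_eq hK v),
    norm_LpToLpRestrictCLM_of_ae_eq (polyMapLp_ae_eq hK w),
    Measure.restrict_restrict_of_subset hTK] at hle

end PolyMap

section Planar

variable {R : Type*} [CommRing R]

/-- The rotated Koszul field `p x^⊥ = (p x₂, -p x₁)` of a polynomial `p`. -/
noncomputable def koszulField :
    MvPolynomial (Fin 2) R →ₗ[R] Fin 2 → MvPolynomial (Fin 2) R :=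
  (LinearMap.toSpanSingleton (MvPolynomial (Fin 2) R) _ ![X 1, -X 0]).restrictScalars R

theorem sum_X_mul_koszulField (p : MvPolynomial (Fin 2) R) :
    ∑ i, X i * koszulField p i = 0 := by
  simp only [koszulField, Fin.sum_univ_two, LinearMap.restrictScalars_apply,
    LinearMap.toSpanSingleton_apply, Pi.smul_apply, smul_eq_mul, Matrix.cons_val_zero,
    Matrix.cons_val_one]
  ring

theorem polyMap_koszulField (p : MvPolynomial (Fin 2) ℝ) (x : EuclideanSpace ℝ (Fin 2)) :
    polyMap (koszulField p) x = eval (fun j => x j) p • perpVec x := by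
  ext i
  fin_cases i <;> simp [polyMap, koszulField, perpVec]

theorem polyMap_polyGradient (q : MvPolynomial (Fin 2) ℝ) (x : EuclideanSpace ℝ (Fin 2)) :
    polyMap (polyGradient q) x = polyGrad2 q x := rfl

end Planar

theorem grad2_koszul_projection_bound_general {ι : Type*} [Fintype ι]
    (μ : Measure (EuclideanSpace ℝ ι)) [IsFiniteMeasureOnCompacts μ] [μ.IsOpenPosMeasure]
    {U K : Set (EuclideanSpace ℝ ι)} (hU : IsOpen U) (hU₀ : U.Nonempty) (hUK : U ⊆ K)
    (hK : Bornology.IsBounded K) (Q : Submodule ℝ (MvPolynomial ι ℝ))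
    (W : Submodule ℝ (ι → MvPolynomial ι ℝ)) [FiniteDimensional ℝ Q] [FiniteDimensional ℝ W]
    (hW : ∀ w ∈ W, ∑ i, X i * w i = 0) :
    ∃ α : ℝ, 0 ≤ α ∧ α < 1 ∧ ∀ T, U ⊆ T → T ⊆ K → ∀ q ∈ Q, ∀ w ∈ W,
      |∫ x in T, ⟪polyMap (polyGradient q) x, polyMap w x⟫_ℝ ∂μ| ≤
        α * √(∫ x in T, ‖polyMap (polyGradient q) x‖ ^ 2 ∂μ) *
          √(∫ x in T, ‖polyMap w x‖ ^ 2 ∂μ) := by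
  obtain ⟨α, hα₀, hα₁, hα⟩ := exists_forall_abs_setIntegral_inner_polyMap_le_of_disjoint μ hU hU₀
    hUK hK ((disjoint_range_polyGradient hW).mono_left (LinearMap.map_le_range (p := Q)))
  exact ⟨α, hα₀, hα₁, fun T hUT hTK q hq => hα T hUT hTK _ (Submodule.mem_map_of_mem hq)⟩

/-- Uniform bound `‖π_S π_{Sᶜ}‖ ≤ α < 1` for the two-dimensional gradient
space and its rotated Koszul complement, in normalized bilinear form: for every measurable
`T ⊆ ℝ²` with `B(0,ρ) ⊆ T ⊆ B(0,1)`, every polynomial `q` of total degree `≤ ℓ+1` and every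
polynomial `p` of total degree `≤ ℓ−1`,
`|∫_T ⟨∇q, p x^⊥⟩| ≤ α (∫_T ‖∇q‖²)^{1/2} (∫_T ‖p x^⊥‖²)^{1/2}` with `x^⊥ = (x₂, −x₁)`. -/
theorem grad2_koszul_projection_bound (ℓ : ℕ) (hℓ : 1 ≤ ℓ) (ρ : ℝ) (hρ0 : 0 < ρ) (hρ1 : ρ < 1) :
    ∃ α : ℝ, 0 ≤ α ∧ α < 1 ∧
      ∀ T : Set (EuclideanSpace ℝ (Fin 2)), MeasurableSet T →
        Metric.ball 0 ρ ⊆ T → T ⊆ Metric.ball 0 1 →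
        ∀ q : MvPolynomial (Fin 2) ℝ, q.totalDegree ≤ ℓ + 1 →
        ∀ p : MvPolynomial (Fin 2) ℝ, p.totalDegree ≤ ℓ - 1 →
          abs (∫ x in T, ⟪polyGrad2 q x, (eval (fun j => x j) p) • perpVec x⟫_ℝ) ≤
            α * Real.sqrt (∫ x in T, ‖polyGrad2 q x‖ ^ 2) *
              Real.sqrt (∫ x in T, ‖(eval (fun j => x j) p) • perpVec x‖ ^ 2) := by
  obtain ⟨α, hα₀, hα₁, hα⟩ := grad2_koszul_projection_bound_general volume Metric.isOpen_ball
    (Metric.nonempty_ball.2 hρ0) (Metric.ball_subset_ball hρ1.le) Metric.isBounded_ball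
    (restrictTotalDegree (Fin 2) ℝ (ℓ + 1))
    ((restrictTotalDegree (Fin 2) ℝ (ℓ - 1)).map koszulField)
    (by rintro _ ⟨p, -, rfl⟩; exact sum_X_mul_koszulField p)
  refine ⟨α, hα₀, hα₁, fun T _ hρT hT q hq p hp => ?_⟩
  simpa only [polyMap_polyGradient, polyMap_koszulField] using
    hα T hρT hT q ((mem_restrictTotalDegree _ _ _).2 hq) _
      (Submodule.mem_map_of_mem ((mem_restrictTotalDegree _ _ _).2 hp))
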